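/- arXiv:1111.3279 — 2 statements merged into one kernel-verified Lean document; each statement's English description precedes it below -/
import Mathlib

section
/- For q a prime power, the graph Γ_q is a (q+1)-regular bipartite graph of girth 8 on 2q^3 + 2q^2 + 2q + 2 vertices; hence it is a (q+1,8)-cage. -/
/-- One side of the bipartition of `Γ_q`: ordinary vertices `(a,b,c)` with
`a ∈ F ∪ {q}` (encoded as `Option F`, `none` being the extra symbol `q`) and
`b, c ∈ F`, together with the special vertices `(q,q,a)` with `a ∈ F ∪ {q}`. -/
abbrev SGam (F : Type*) := (Option F × F × F) ⊕ Option F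

/-- The incidence relation of `Γ_q`: `lineAdj l p` says the line `l ∈ V₁` is
incident with the point `p ∈ V₀`, following the explicit formula of Definition 1. -/
def lineAdj {F : Type*} [Field F] : SGam F → SGam F → Prop
  | Sum.inl (some a, b, c), Sum.inl (some x, y, z) =>
      y = a * x + b ∧ z = a ^ 2 * x + 2 * a * b + c
  | Sum.inl (some a, _, c), Sum.inl (none, y, z) => y = a ∧ z = c
  | Sum.inl (none, b, c), Sum.inl (some x, y, _) => x = c ∧ y = b
  | Sum.inl (none, _, c), Sum.inr (some z) => z = c
  | Sum.inr (some a), Sum.inl (none, y, _) => y = a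
  | Sum.inr (some _), Sum.inr none => True
  | Sum.inr none, Sum.inr _ => True
  | _, _ => False

/-- The bipartite graph `Γ_q`: `Sum.inl` is the point side `V₀`, `Sum.inr` is the
line side `V₁`, and a point is adjacent to a line iff they are incident. -/
def GammaQ (F : Type*) [Field F] : SimpleGraph (SGam F ⊕ SGam F) :=
  SimpleGraph.fromRel (fun u v =>
    match u, v with
    | Sum.inl p, Sum.inr l => lineAdj l p
    | _, _ => False)

/-- The point `(a,b,c)₀`, `a ∈ F ∪ {q}`. -/
def pt {F : Type*} (a : Option F) (b c : F) : SGam F ⊕ SGam F := Sum.inl (Sum.inl (a, b, c))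
/-- The point `(q,q,a)₀`, `a ∈ F ∪ {q}`. -/
def ptq {F : Type*} (a : Option F) : SGam F ⊕ SGam F := Sum.inl (Sum.inr a)
/-- The line `(a,b,c)₁`, `a ∈ F ∪ {q}`. -/
def ln {F : Type*} (a : Option F) (b c : F) : SGam F ⊕ SGam F := Sum.inr (Sum.inl (a, b, c))
/-- The line `(q,q,a)₁`, `a ∈ F ∪ {q}`. -/
def lnq {F : Type*} (a : Option F) : SGam F ⊕ SGam F := Sum.inr (Sum.inr a)

namespace GammaQ

variable {F : Type*} [Field F]

@[simp]
theorem adj_inl_inr (p l : SGam F) : (GammaQ F).Adj (Sum.inl p) (Sum.inr l) ↔ lineAdj l p := by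
  simp [GammaQ]

@[simp]
theorem adj_inr_inl (p l : SGam F) : (GammaQ F).Adj (Sum.inr l) (Sum.inl p) ↔ lineAdj l p := by
  simp [GammaQ]

@[simp]
theorem not_adj_inl_inl (p p' : SGam F) : ¬ (GammaQ F).Adj (Sum.inl p) (Sum.inl p') := by
  simp [GammaQ]

@[simp]
theorem not_adj_inr_inr (l l' : SGam F) : ¬ (GammaQ F).Adj (Sum.inr l) (Sum.inr l') := by
  simp [GammaQ]

/-- The points of a line, parametrized by `F ∪ {q}`. -/
def pointOn : SGam F → Option F → SGam F
  | Sum.inl (some a, b, c), some x => Sum.inl (some x, a * x + b, a ^ 2 * x + 2 * a * b + c)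
  | Sum.inl (some a, _, c), none => Sum.inl (none, a, c)
  | Sum.inl (none, b, c), some x => Sum.inl (some c, b, x)
  | Sum.inl (none, _, c), none => Sum.inr (some c)
  | Sum.inr (some a), some x => Sum.inl (none, a, x)
  | Sum.inr (some _), none => Sum.inr none
  | Sum.inr none, x => Sum.inr x

/-- The lines through a point, parametrized by `F ∪ {q}`. -/
def lineThrough : SGam F → Option F → SGam F
  | Sum.inl (some x, y, z), some a =>
      Sum.inl (some a, y - a * x, z - a ^ 2 * x - 2 * a * (y - a * x))
  | Sum.inl (some x, y, _), none => Sum.inl (none, y, x)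
  | Sum.inl (none, y, z), some b => Sum.inl (some y, b, z)
  | Sum.inl (none, y, _), none => Sum.inr (some y)
  | Sum.inr (some z), some b => Sum.inl (none, b, z)
  | Sum.inr (some _), none => Sum.inr none
  | Sum.inr none, x => Sum.inr x

theorem pointOn_injective (l : SGam F) : Function.Injective (pointOn l) := by
  intro x y h
  rcases l with ⟨_ | a, b, c⟩ | _ | a <;> rcases x with _ | x <;> rcases y with _ | y <;>
    simp_all [pointOn]

theorem lineThrough_injective (p : SGam F) : Function.Injective (lineThrough p) := by
  intro x y h
  rcases p with ⟨_ | a, b, c⟩ | _ | a <;> rcases x with _ | x <;> rcases y with _ | y <;>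
    simp_all [lineThrough]

theorem lineAdj_iff_mem_range_pointOn (l p : SGam F) :
    lineAdj l p ↔ p ∈ Set.range (pointOn l) := by
  rcases l with ⟨_ | a, b, c⟩ | _ | a <;> rcases p with ⟨_ | x, y, z⟩ | _ | x <;>
    simp [lineAdj, pointOn, Option.exists] <;> grind

theorem lineAdj_iff_mem_range_lineThrough (l p : SGam F) :
    lineAdj l p ↔ l ∈ Set.range (lineThrough p) := by
  rcases l with ⟨_ | a, b, c⟩ | _ | a <;> rcases p with ⟨_ | x, y, z⟩ | _ | x <;>
    simp [lineAdj, lineThrough, Option.exists] <;> grind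

theorem neighborSet_inl (p : SGam F) :
    (GammaQ F).neighborSet (Sum.inl p) = Set.range (Sum.inr ∘ lineThrough p) := by
  ext (_ | l)
  · simp
  · simp [lineAdj_iff_mem_range_lineThrough]

theorem neighborSet_inr (l : SGam F) :
    (GammaQ F).neighborSet (Sum.inr l) = Set.range (Sum.inl ∘ pointOn l) := by
  ext (p | _)
  · simp [lineAdj_iff_mem_range_pointOn]
  · simp

theorem ncard_neighborSet [Fintype F] (v : SGam F ⊕ SGam F) :
    ((GammaQ F).neighborSet v).ncard = Fintype.card F + 1 := by
  rcases v with p | l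
  · rw [neighborSet_inl, Set.ncard_range_of_injective
      (Sum.inr_injective.comp (lineThrough_injective p)), Nat.card_eq_fintype_card,
      Fintype.card_option]
  · rw [neighborSet_inr, Set.ncard_range_of_injective
      (Sum.inl_injective.comp (pointOn_injective l)), Nat.card_eq_fintype_card,
      Fintype.card_option]

/-- Two distinct lines meet in at most one point. -/
theorem no_digon {l₁ l₂ p₁ p₂ : SGam F} (h₁₁ : lineAdj l₁ p₁) (h₂₁ : lineAdj l₂ p₁)
    (h₂₂ : lineAdj l₂ p₂) (h₁₂ : lineAdj l₁ p₂) : l₁ = l₂ ∨ p₁ = p₂ := by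
  rcases l₁ with ⟨_ | a, b, c⟩ | _ | a <;> rcases p₁ with ⟨_ | x, y, z⟩ | _ | x <;>
    simp only [lineAdj] at h₁₁ <;>
  rcases l₂ with ⟨_ | a', b', c'⟩ | _ | a' <;> simp only [lineAdj] at h₂₁ <;>
  rcases p₂ with ⟨_ | x', y', z'⟩ | _ | x' <;> simp only [lineAdj] at h₂₂ h₁₂ <;>
  first | grind | skip
  have h : (a - a') * (x - x') = 0 := by grind
  rcases mul_eq_zero.mp h with h | h <;> grind

/-- The incidence structure has no triangles. -/
theorem no_triangle {l₁ l₂ l₃ p₁ p₂ p₃ : SGam F} (h₁₁ : lineAdj l₁ p₁) (h₂₁ : lineAdj l₂ p₁)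
    (h₂₂ : lineAdj l₂ p₂) (h₃₂ : lineAdj l₃ p₂) (h₃₃ : lineAdj l₃ p₃) (h₁₃ : lineAdj l₁ p₃) :
    l₁ = l₂ ∨ l₂ = l₃ ∨ l₃ = l₁ ∨ p₁ = p₂ ∨ p₂ = p₃ ∨ p₃ = p₁ := by
  rcases l₁ with ⟨_ | a, b, c⟩ | _ | a <;> rcases p₁ with ⟨_ | x, y, z⟩ | _ | x <;>
    simp only [lineAdj] at h₁₁ <;>
  rcases l₂ with ⟨_ | a', b', c'⟩ | _ | a' <;> simp only [lineAdj] at h₂₁ <;>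
  rcases p₂ with ⟨_ | x', y', z'⟩ | _ | x' <;> simp only [lineAdj] at h₂₂ <;>
  rcases l₃ with ⟨_ | a'', b'', c''⟩ | _ | a'' <;> simp only [lineAdj] at h₃₂ <;>
  rcases p₃ with ⟨_ | x'', y'', z''⟩ | _ | x'' <;> simp only [lineAdj] at h₃₃ h₁₃ <;>
  first | grind | skip
  · have h : (a'' - a) ^ 2 * (x' - x'') = 0 := by grind
    rcases mul_eq_zero.mp h with h | h
    · have h := pow_eq_zero_iff two_ne_zero |>.mp h
      grind
    · grind
  · have h : (a - a') ^ 2 * (x - x'') = 0 := by grind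
    rcases mul_eq_zero.mp h with h | h
    · have h := pow_eq_zero_iff two_ne_zero |>.mp h
      grind
    · grind
  · have h : (a' - a) ^ 2 * (x - x') = 0 := by grind
    rcases mul_eq_zero.mp h with h | h
    · have h := pow_eq_zero_iff two_ne_zero |>.mp h
      grind
    · grind
  · have h : (a - a') * (a - a'') * (x - x'') = 0 := by grind
    rcases mul_eq_zero.mp h with h | h
    · rcases mul_eq_zero.mp h with h | h <;> grind
    · grind

theorem eq_or_eq_of_closed_four {s t u v : SGam F ⊕ SGam F} (hst : (GammaQ F).Adj s t)
    (htu : (GammaQ F).Adj t u) (huv : (GammaQ F).Adj u v) (hvs : (GammaQ F).Adj v s) :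
    s = u ∨ t = v := by
  rcases s with s | s <;> rcases t with t | t <;> simp at hst <;>
    rcases u with u | u <;> simp at htu <;> rcases v with v | v <;> simp at huv hvs
  · have := no_digon hst hvs huv htu
    grind
  · have := no_digon hst htu huv hvs
    grind

theorem eq_or_eq_of_closed_six {s t u v w x : SGam F ⊕ SGam F} (hst : (GammaQ F).Adj s t)
    (htu : (GammaQ F).Adj t u) (huv : (GammaQ F).Adj u v) (hvw : (GammaQ F).Adj v w)
    (hwx : (GammaQ F).Adj w x) (hxs : (GammaQ F).Adj x s) :
    s = u ∨ u = w ∨ w = s ∨ t = v ∨ v = x ∨ x = t := by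
  rcases s with s | s <;> rcases t with t | t <;> simp at hst <;>
    rcases u with u | u <;> simp at htu <;> rcases v with v | v <;> simp at huv <;>
    rcases w with w | w <;> simp at hvw <;> rcases x with x | x <;> simp at hwx hxs
  · have := no_triangle hst hxs hwx hvw huv htu
    grind
  · have := no_triangle hst htu huv hvw hwx hxs
    grind

/-- The bipartition of `Γ_q` into points and lines, as a 2-coloring. -/
def sideColoring : (GammaQ F).Coloring Bool :=
  SimpleGraph.Coloring.mk Sum.isLeft (by rintro (_ | _) (_ | _) h <;> simp_all)

theorem eight_le_egirth : 8 ≤ (GammaQ F).egirth := by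
  rw [SimpleGraph.le_egirth]
  intro v w hw
  by_contra! hlt
  have hlt : w.length < 8 := by exact_mod_cast hlt
  have hnd := hw.support_nodup
  have h3 := hw.three_le_length
  have heven : Even w.length := (sideColoring.even_length_iff_congr w).mpr Iff.rfl
  clear hw
  rcases w with _ | ⟨h₁, _ | ⟨h₂, _ | ⟨h₃, _ | ⟨h₄, _ | ⟨h₅, _ | ⟨h₆, _ | ⟨h₇, _ | ⟨h₈, w⟩⟩⟩⟩⟩⟩⟩⟩ <;>
    simp only [SimpleGraph.Walk.length_cons, SimpleGraph.Walk.length_nil, Nat.even_iff]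
      at h3 hlt heven <;>
    first | omega | skip
  · have := eq_or_eq_of_closed_four h₁ h₂ h₃ h₄
    simp at hnd
    grind
  · have := eq_or_eq_of_closed_six h₁ h₂ h₃ h₄ h₅ h₆
    simp at hnd
    grind

theorem egirth_le_eight : (GammaQ F).egirth ≤ 8 := by
  have h₁ : (GammaQ F).Adj (pt (some 0) 0 0) (ln (some 0) 0 0) := by simp [pt, ln, lineAdj]
  have h₂ : (GammaQ F).Adj (ln (some 0) 0 0) (pt none 0 0) := by simp [pt, ln, lineAdj]
  have h₃ : (GammaQ F).Adj (pt none 0 0) (lnq (some 0)) := by simp [pt, lnq, lineAdj]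
  have h₄ : (GammaQ F).Adj (lnq (some 0)) (ptq none) := by simp [ptq, lnq, lineAdj]
  have h₅ : (GammaQ F).Adj (ptq none) (lnq none) := by simp [ptq, lnq, lineAdj]
  have h₆ : (GammaQ F).Adj (lnq none) (ptq (some 0)) := by simp [ptq, lnq, lineAdj]
  have h₇ : (GammaQ F).Adj (ptq (some 0)) (ln none 0 0) := by simp [ptq, ln, lineAdj]
  have h₈ : (GammaQ F).Adj (ln none 0 0) (pt (some 0) 0 0) := by simp [pt, ln, lineAdj]
  let w : (GammaQ F).Walk (pt (some 0) 0 0) (pt (some 0) 0 0) :=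
    .cons h₁ <| .cons h₂ <| .cons h₃ <| .cons h₄ <| .cons h₅ <| .cons h₆ <| .cons h₇ <|
      .cons h₈ .nil
  have hw : w.IsCycle := by
    refine (SimpleGraph.Walk.cons_isCycle_iff _ _).mpr ?_
    simp only [SimpleGraph.Walk.cons_isPath_iff, SimpleGraph.Walk.support_cons,
      SimpleGraph.Walk.edges_cons, SimpleGraph.Walk.support_nil, SimpleGraph.Walk.edges_nil]
    simp [pt, ptq, ln, lnq]
  simpa [w] using hw.egirth_le_length

theorem card_vertices {F : Type*} [Fintype F] : Fintype.card (SGam F ⊕ SGam F) =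
    2 * Fintype.card F ^ 3 + 2 * Fintype.card F ^ 2 + 2 * Fintype.card F + 2 := by
  simp only [Fintype.card_sum, Fintype.card_prod, Fintype.card_option]
  ring

end GammaQ

/-- `Γ_q` is a `(q+1)`-regular bipartite graph of girth 8 on `2q³+2q²+2q+2`
vertices; hence it is a `(q+1,8)`-cage (its order meets the Moore bound). -/
theorem stmt12 {F : Type*} [Field F] [Fintype F] [DecidableEq F] :
    (∀ v : SGam F ⊕ SGam F,
        ((GammaQ F).neighborSet v).ncard = Fintype.card F + 1) ∧
    (GammaQ F).egirth = 8 ∧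
    Fintype.card (SGam F ⊕ SGam F) =
      2 * Fintype.card F ^ 3 + 2 * Fintype.card F ^ 2 + 2 * Fintype.card F + 2 :=
  ⟨GammaQ.ncard_neighborSet, le_antisymm GammaQ.egirth_le_eight GammaQ.eight_le_egirth,
    GammaQ.card_vertices⟩
end

section
/- If U is a perfect dominating set of a (q+1)-regular graph G of girth 8 such that the graph G − U is q-regular, then G − U is a q-regular graph of girth at least 8. In particular, removing the perfect dominating set B of Theorem 3(ii) from Γ_q yields a q-regular graph of girth 8 on 2q(q^2 − 2) vertices. -/
/-- The set of vertices at distance at most `n` from `v` (the closed ball `Nⁿ[v]`,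
defined via walks). -/
def ball {V : Type*} (G : SimpleGraph V) (v : V) (n : ℕ) : Set V :=
  {x | ∃ p : G.Walk v x, p.length ≤ n}

/-- The perfect dominating set `B` of Theorem 3(ii):
`B = ⋃_{c∈F} N[(q,0,c)₁] ∪ N[(q,q,0)₁] ∪ (⋂_{c∈F} N²[(q,0,c)₁] ∩ N²[(q,q,0)₁]) ∪ N²[(q,q,ξ)₁]`. -/
def Bset (F : Type*) [Field F] (ξ : F) : Set (SGam F ⊕ SGam F) :=
  (⋃ c : F, ball (GammaQ F) (ln none 0 c) 1) ∪ ball (GammaQ F) (lnq (some 0)) 1 ∪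
    ((⋂ c : F, ball (GammaQ F) (ln none 0 c) 2) ∩ ball (GammaQ F) (lnq (some 0)) 2) ∪
    ball (GammaQ F) (lnq (some ξ)) 2


section Incidence
variable {F : Type*} [Field F]

theorem eq_or_eq_of_lineAdj {l₁ l₂ p₁ p₂ : Option F × F × F}
    (h₁₁ : lineAdj (.inl l₁) (.inl p₁)) (h₁₂ : lineAdj (.inl l₁) (.inl p₂))
    (h₂₁ : lineAdj (.inl l₂) (.inl p₁)) (h₂₂ : lineAdj (.inl l₂) (.inl p₂)) :
    l₁ = l₂ ∨ p₁ = p₂ := by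
  obtain ⟨_ | a, b, c⟩ := l₁ <;> obtain ⟨_ | a', b', c'⟩ := l₂ <;>
    obtain ⟨_ | x, y, z⟩ := p₁ <;> obtain ⟨_ | x', y', z'⟩ := p₂ <;>
    simp only [lineAdj] at h₁₁ h₁₂ h₂₁ h₂₂
  case some.some.some.some =>
    have h : (a - a') * (x - x') = 0 := by grind
    rcases mul_eq_zero.1 h with h | h <;> rw [sub_eq_zero] at h <;> grind
  all_goals grind

theorem eq_of_lineAdj_triangle {l₁ l₂ l₃ p₁ p₂ p₃ : Option F × F × F}
    (h₁₁ : lineAdj (.inl l₁) (.inl p₁)) (h₁₂ : lineAdj (.inl l₁) (.inl p₂))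
    (h₂₂ : lineAdj (.inl l₂) (.inl p₂)) (h₂₃ : lineAdj (.inl l₂) (.inl p₃))
    (h₃₃ : lineAdj (.inl l₃) (.inl p₃)) (h₃₁ : lineAdj (.inl l₃) (.inl p₁)) :
    l₁ = l₂ ∨ l₂ = l₃ ∨ l₃ = l₁ ∨ p₁ = p₂ ∨ p₂ = p₃ ∨ p₃ = p₁ := by
  obtain ⟨_ | a, b, c⟩ := l₁ <;> obtain ⟨_ | a', b', c'⟩ := l₂ <;>
    obtain ⟨_ | a'', b'', c''⟩ := l₃ <;>
    obtain ⟨_ | x, y, z⟩ := p₁ <;> obtain ⟨_ | x', y', z'⟩ := p₂ <;>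
    obtain ⟨_ | x'', y'', z''⟩ := p₃ <;>
    simp only [lineAdj] at h₁₁ h₁₂ h₂₂ h₂₃ h₃₃ h₃₁
  case some.some.some.none.some.some =>
    have h : (a' - a) * (a' - a) * (x' - x'') = 0 := by grind
    rcases mul_eq_zero.1 h with h | h <;> simp only [mul_self_eq_zero, sub_eq_zero] at h <;> grind
  case some.some.some.some.none.some =>
    have h : (a'' - a) * (a'' - a) * (x - x'') = 0 := by grind
    rcases mul_eq_zero.1 h with h | h <;> simp only [mul_self_eq_zero, sub_eq_zero] at h <;> grind
  case some.some.some.some.some.none =>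
    have h : (a - a') * (a - a') * (x - x') = 0 := by grind
    rcases mul_eq_zero.1 h with h | h <;> simp only [mul_self_eq_zero, sub_eq_zero] at h <;> grind
  case some.some.some.some.some.some =>
    have h : (a' - a) * (a' - a'') * (x' - x'') = 0 := by grind
    simp only [mul_eq_zero, sub_eq_zero] at h
    rcases h with (h | h) | h <;> grind
  all_goals grind
end Incidence

section Vertices
variable {F : Type*} [Field F]

theorem mem_ball_one {V : Type*} {G : SimpleGraph V} {v x : V} :
    x ∈ ball G v 1 ↔ x = v ∨ G.Adj v x := by
  constructor
  · rintro ⟨p, hp⟩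
    match p, hp with
    | .nil, _ => exact .inl rfl
    | .cons h .nil, _ => exact .inr h
    | .cons _ (.cons _ _), hp => simp at hp
  · rintro (rfl | h)
    · exact ⟨.nil, by simp⟩
    · exact ⟨.cons h .nil, by simp⟩

theorem mem_ball_two {V : Type*} {G : SimpleGraph V} {v x : V} :
    x ∈ ball G v 2 ↔ x = v ∨ G.Adj v x ∨ ∃ w, G.Adj v w ∧ G.Adj w x := by
  constructor
  · rintro ⟨p, hp⟩
    match p, hp with
    | .nil, _ => exact .inl rfl
    | .cons h .nil, _ => exact .inr (.inl h)
    | .cons h (.cons h' .nil), _ => exact .inr (.inr ⟨_, h, h'⟩)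
    | .cons _ (.cons _ (.cons _ _)), hp => simp at hp
  · rintro (rfl | h | ⟨w, h, h'⟩)
    · exact ⟨.nil, by simp⟩
    · exact ⟨.cons h .nil, by simp⟩
    · exact ⟨.cons h (.cons h' .nil), by simp⟩

@[simp] theorem GammaQ_adj_inl_inr {p l : SGam F} :
    (GammaQ F).Adj (.inl p) (.inr l) ↔ lineAdj l p := by
  simp [GammaQ]

@[simp] theorem GammaQ_adj_inr_inl {p l : SGam F} :
    (GammaQ F).Adj (.inr l) (.inl p) ↔ lineAdj l p := by
  simp [GammaQ]

@[simp] theorem not_GammaQ_adj_inl_inl {p p' : SGam F} :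
    ¬ (GammaQ F).Adj (.inl p) (.inl p') := by
  simp [GammaQ]

@[simp] theorem not_GammaQ_adj_inr_inr {l l' : SGam F} :
    ¬ (GammaQ F).Adj (.inr l) (.inr l') := by
  simp [GammaQ]

theorem pt_mem_Bset {ξ : F} {a : Option F} {y z : F} :
    Sum.inl (Sum.inl (a, y, z)) ∈ Bset F ξ ↔ y = 0 ∨ a = none ∧ y = ξ := by
  cases a <;> simp [Bset, mem_ball_one, mem_ball_two, ln, lnq, lineAdj]

theorem ptq_mem_Bset {ξ : F} {a : Option F} :
    Sum.inl (Sum.inr a) ∈ Bset F ξ := by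
  cases a <;> simp [Bset, mem_ball_one, mem_ball_two, ln, lnq, lineAdj]

theorem ln_none_mem_Bset {ξ : F} {b c : F} :
    Sum.inr (Sum.inl (none, b, c)) ∈ Bset F ξ ↔ b = 0 := by
  simp [Bset, mem_ball_one, mem_ball_two, ln, lnq, lineAdj,
    Sum.exists, Prod.exists, Option.exists]

theorem ln_some_mem_Bset {ξ : F} {a b c : F} :
    Sum.inr (Sum.inl (some a, b, c)) ∈ Bset F ξ ↔ a = ξ ∨ a = 0 ∧ b = 0 := by
  simp [Bset, mem_ball_one, mem_ball_two, ln, lnq, lineAdj,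
    Sum.exists, Prod.exists, Option.exists]
  constructor
  · rintro (⟨h, rfl⟩ | rfl)
    · exact .inr ⟨rfl, by simpa using h 0⟩
    · exact .inl rfl
  · rintro (rfl | ⟨rfl, rfl⟩) <;> simp

theorem lnq_mem_Bset {ξ : F} {a : Option F} :
    Sum.inr (Sum.inr a) ∈ Bset F ξ := by
  cases a <;> simp [Bset, mem_ball_one, mem_ball_two, ln, lnq, lineAdj,
    Sum.exists, Prod.exists, Option.exists]

theorem ncard_induce_neighborSet {V : Type*} (G : SimpleGraph V) (s : Set V) (v : s) :
    ((G.induce s).neighborSet v).ncard = (G.neighborSet v ∩ s).ncard := by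
  rw [← Set.ncard_image_of_injective _ Subtype.val_injective]
  congr 1
  ext w
  simp [and_comm]

theorem ncard_eq_card_of_eq_range {α V : Type*} [Fintype α] {s : Set V} (f : α → V)
    (hf : f.Injective) (h : ∀ w, w ∈ s ↔ ∃ a, f a = w) : s.ncard = Fintype.card α := by
  have : s = Set.range f := Set.ext h
  rw [this, ← Set.image_univ, Set.ncard_image_of_injective _ hf, Set.ncard_univ,
    Nat.card_eq_fintype_card]

theorem ncard_neighborSet_induce_compl_Bset [Fintype F] {ξ : F}
    (v : ↥(Bset F ξ)ᶜ) :
    (((GammaQ F).induce (Bset F ξ)ᶜ).neighborSet v).ncard = Fintype.card F := by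
  classical
  rw [ncard_induce_neighborSet]
  obtain ⟨(⟨_ | x, y, z⟩ | _) | (⟨_ | a, b, c⟩ | _), hv⟩ := v <;>
    simp only [Set.mem_compl_iff, pt_mem_Bset, ptq_mem_Bset, ln_none_mem_Bset, ln_some_mem_Bset,
      lnq_mem_Bset, not_true] at hv
  · refine ncard_eq_card_of_eq_range (fun b => .inr (.inl (some y, b, z)))
      (fun _ _ h => by simpa using h) ?_
    rintro (_ | ⟨_ | _, _, _⟩ | _) <;>
      simp [lineAdj, ln_none_mem_Bset, ln_some_mem_Bset, lnq_mem_Bset]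
    grind
  · refine ncard_eq_card_of_eq_range (fun a => if a = ξ then .inr (.inl (none, y, x)) else
      .inr (.inl (some a, y - a * x, z - a ^ 2 * x - 2 * a * (y - a * x))))
      (fun _ _ h => by grind) ?_
    rintro (_ | ⟨_ | _, _, _⟩ | _) <;>
      simp [lineAdj, ln_none_mem_Bset, ln_some_mem_Bset, lnq_mem_Bset]
    case inr.inl.none => exact ⟨fun _ => ⟨ξ, by grind⟩, by grind⟩
    all_goals grind
  · refine ncard_eq_card_of_eq_range (fun z => .inl (.inl (some c, b, z)))
      (fun _ _ h => by simpa using h) ?_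
    rintro ((⟨_ | _, _, _⟩ | _) | _) <;>
      simp [lineAdj, pt_mem_Bset, ptq_mem_Bset]
    grind
  · refine ncard_eq_card_of_eq_range (fun x => if a * x + b = 0 then .inl (.inl (none, a, c)) else
      .inl (.inl (some x, a * x + b, a ^ 2 * x + 2 * a * b + c))) (fun _ _ h => by grind) ?_
    rintro ((⟨_ | _, _, _⟩ | _) | _) <;>
      simp [lineAdj, pt_mem_Bset, ptq_mem_Bset]
    case inl.inl.none => exact ⟨fun _ => ⟨-b / a, by grind⟩, by grind⟩
    all_goals grind

theorem ncard_compl_Bset [Fintype F] {ξ : F} (hξ : ξ ≠ 0) :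
    ((Bset F ξ)ᶜ : Set (SGam F ⊕ SGam F)).ncard =
      2 * Fintype.card F * (Fintype.card F ^ 2 - 2) := by
  classical
  rw [Set.ncard_eq_toFinset_card', ← Set.filter_mem_univ_eq_toFinset, Finset.card_filter]
  have key (s : Finset F) (k : ℕ) :
      ∑ x, (if x ∈ s then 0 else k) = (Fintype.card F - s.card) * k := by
    simp [Finset.sum_ite, Finset.filter_notMem_eq_sdiff, Finset.card_sdiff]
  have hzero (k : ℕ) : ∑ x : F, (if x = 0 then 0 else k) = (Fintype.card F - 1) * k := by
    simpa using key {0} k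
  have hpair (k : ℕ) :
      ∑ x : F, (if ¬x = 0 ∧ ¬x = ξ then k else 0) = (Fintype.card F - 2) * k := by
    rw [← Finset.card_pair hξ.symm, ← key]
    exact Finset.sum_congr rfl fun x _ => by grind
  have hlines (x : F) (k : ℕ) : ∑ y : F, (if ¬x = ξ ∧ (x = 0 → ¬y = 0) then k else 0) =
      (if ¬x = 0 ∧ ¬x = ξ then Fintype.card F * k else 0) +
        if x = 0 then (Fintype.card F - 1) * k else 0 := by
    by_cases h₀ : x = 0
    · simp [h₀, hξ.symm, ← hzero]
    · by_cases h₁ : x = ξ <;> simp [h₀, h₁, hξ]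
  simp only [Fintype.sum_sum_type, Fintype.sum_prod_type, Fintype.sum_option, Set.mem_compl_iff,
    pt_mem_Bset, ptq_mem_Bset, ln_none_mem_Bset, ln_some_mem_Bset, lnq_mem_Bset, not_true]
  simp [hzero, hpair, hlines, Finset.sum_add_distrib]
  obtain ⟨n, hn⟩ := Nat.exists_eq_add_of_le' (Fintype.one_lt_card (α := F))
  have hsq : (n + 2) ^ 2 - 2 = n ^ 2 + 4 * n + 2 := by
    rw [Nat.sub_eq_iff_eq_add (by nlinarith)]; ring
  have hn' : Fintype.card F = n + 2 := hn
  simp only [hn', hsq, Nat.add_sub_cancel, show n + 2 - 1 = n + 1 from rfl]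
  ring

/-- The bipartition of `Γ_q` into points and lines. -/
def GammaQ.bicoloring (F : Type*) [Field F] : (GammaQ F).Coloring Bool :=
  .mk Sum.isLeft <| by rintro (_ | _) (_ | _) <;> simp

theorem eight_le_egirth_of_coloring {V : Type*} {G : SimpleGraph V} (C : G.Coloring Bool)
    (hfour : ∀ a b c d, G.Adj a b → G.Adj b c → G.Adj c d → G.Adj d a → a = c ∨ b = d)
    (hsix : ∀ a b c d e f, G.Adj a b → G.Adj b c → G.Adj c d → G.Adj d e → G.Adj e f →
      G.Adj f a → a = c ∨ c = e ∨ e = a ∨ b = d ∨ d = f ∨ f = b) :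
    8 ≤ G.egirth := by
  rw [SimpleGraph.le_egirth]
  intro v w hw
  have heven : Even w.length := (C.even_length_iff_congr w).2 Iff.rfl
  have hthree := hw.three_le_length
  have hnodup := hw.support_nodup
  clear hw
  have h₄ : w.length ≠ 4 := by
    intro h
    match w, h with
    | .cons h₀ (.cons h₁ (.cons h₂ (.cons h₃ .nil))), _ =>
      have := hfour _ _ _ _ h₀ h₁ h₂ h₃
      simp at hnodup
      grind
  have h₆ : w.length ≠ 6 := by
    intro h
    match w, h with
    | .cons h₀ (.cons h₁ (.cons h₂ (.cons h₃ (.cons h₄ (.cons h₅ .nil))))), _ =>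
      have := hsix _ _ _ _ _ _ h₀ h₁ h₂ h₃ h₄ h₅
      simp at hnodup
      grind
  have : 8 ≤ w.length := by grind
  exact_mod_cast this

theorem exists_of_notMem_Bset {ξ : F} {v : SGam F ⊕ SGam F} (hv : v ∉ Bset F ξ) :
    (∃ p, v = .inl (.inl p)) ∨ ∃ l, v = .inr (.inl l) := by
  obtain (p | _) | (l | _) := v
  · exact .inl ⟨p, rfl⟩
  · exact absurd ptq_mem_Bset hv
  · exact .inr ⟨l, rfl⟩
  · exact absurd lnq_mem_Bset hv

theorem eight_le_egirth_induce_compl_Bset (ξ : F) :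
    8 ≤ ((GammaQ F).induce (Bset F ξ)ᶜ).egirth := by
  refine eight_le_egirth_of_coloring
    ((GammaQ.bicoloring F).comp (SimpleGraph.Embedding.induce (Bset F ξ)ᶜ).toHom) ?_ ?_
  · rintro ⟨a, ha⟩ ⟨b, hb⟩ ⟨c, hc⟩ ⟨d, hd⟩ hab hbc hcd hda
    simp only [SimpleGraph.comap_adj, Function.Embedding.subtype_apply, Subtype.mk.injEq] at *
    obtain ⟨a, rfl⟩ | ⟨a, rfl⟩ := exists_of_notMem_Bset ha <;>
    obtain ⟨b, rfl⟩ | ⟨b, rfl⟩ := exists_of_notMem_Bset hb <;>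
    simp only [GammaQ_adj_inl_inr, GammaQ_adj_inr_inl, not_GammaQ_adj_inl_inl,
      not_GammaQ_adj_inr_inr] at hab <;>
    obtain ⟨c, rfl⟩ | ⟨c, rfl⟩ := exists_of_notMem_Bset hc <;>
    simp only [GammaQ_adj_inl_inr, GammaQ_adj_inr_inl, not_GammaQ_adj_inl_inl,
      not_GammaQ_adj_inr_inr] at hbc <;>
    obtain ⟨d, rfl⟩ | ⟨d, rfl⟩ := exists_of_notMem_Bset hd <;>
    simp only [GammaQ_adj_inl_inr, GammaQ_adj_inr_inl, not_GammaQ_adj_inl_inl,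
      not_GammaQ_adj_inr_inr] at hcd <;>
    simp only [GammaQ_adj_inl_inr, GammaQ_adj_inr_inl] at hda
    · have := eq_or_eq_of_lineAdj hab hbc hda hcd
      grind
    · have := eq_or_eq_of_lineAdj hab hda hbc hcd
      grind
  · rintro ⟨a, ha⟩ ⟨b, hb⟩ ⟨c, hc⟩ ⟨d, hd⟩ ⟨e, he⟩ ⟨f, hf⟩ hab hbc hcd hde hef hfa
    simp only [SimpleGraph.comap_adj, Function.Embedding.subtype_apply, Subtype.mk.injEq] at *
    obtain ⟨a, rfl⟩ | ⟨a, rfl⟩ := exists_of_notMem_Bset ha <;>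
    obtain ⟨b, rfl⟩ | ⟨b, rfl⟩ := exists_of_notMem_Bset hb <;>
    simp only [GammaQ_adj_inl_inr, GammaQ_adj_inr_inl, not_GammaQ_adj_inl_inl,
      not_GammaQ_adj_inr_inr] at hab <;>
    obtain ⟨c, rfl⟩ | ⟨c, rfl⟩ := exists_of_notMem_Bset hc <;>
    simp only [GammaQ_adj_inl_inr, GammaQ_adj_inr_inl, not_GammaQ_adj_inl_inl,
      not_GammaQ_adj_inr_inr] at hbc <;>
    obtain ⟨d, rfl⟩ | ⟨d, rfl⟩ := exists_of_notMem_Bset hd <;>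
    simp only [GammaQ_adj_inl_inr, GammaQ_adj_inr_inl, not_GammaQ_adj_inl_inl,
      not_GammaQ_adj_inr_inr] at hcd <;>
    obtain ⟨e, rfl⟩ | ⟨e, rfl⟩ := exists_of_notMem_Bset he <;>
    simp only [GammaQ_adj_inl_inr, GammaQ_adj_inr_inl, not_GammaQ_adj_inl_inl,
      not_GammaQ_adj_inr_inr] at hde <;>
    obtain ⟨f, rfl⟩ | ⟨f, rfl⟩ := exists_of_notMem_Bset hf <;>
    simp only [GammaQ_adj_inl_inr, GammaQ_adj_inr_inl, not_GammaQ_adj_inl_inl,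
      not_GammaQ_adj_inr_inr] at hef <;>
    simp only [GammaQ_adj_inl_inr, GammaQ_adj_inr_inl] at hfa
    · have := eq_of_lineAdj_triangle hab hbc hcd hde hef hfa
      grind
    · have := eq_of_lineAdj_triangle hfa hab hbc hcd hde hef
      grind

theorem egirth_induce_compl_Bset_le {ξ : F} (hξ : ξ ≠ 0) :
    ((GammaQ F).induce (Bset F ξ)ᶜ).egirth ≤ 8 := by
  let p (x z : F) : ↥(Bset F ξ)ᶜ := ⟨.inl (.inl (some x, 1, z)), by simp [pt_mem_Bset]⟩
  let l (c : F) : ↥(Bset F ξ)ᶜ := ⟨.inr (.inl (some 0, 1, c)), by simp [ln_some_mem_Bset, hξ.symm]⟩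
  let m (c : F) : ↥(Bset F ξ)ᶜ := ⟨.inr (.inl (none, 1, c)), by simp [ln_none_mem_Bset]⟩
  have hpl (x z) : ((GammaQ F).induce (Bset F ξ)ᶜ).Adj (p x z) (l z) := by simp [p, l, lineAdj]
  have hpm (x z) : ((GammaQ F).induce (Bset F ξ)ᶜ).Adj (p x z) (m x) := by simp [p, m, lineAdj]
  let w : ((GammaQ F).induce (Bset F ξ)ᶜ).Walk (p 0 0) (p 0 0) :=
    .cons (hpl 0 0) <| .cons (hpl 1 0).symm <| .cons (hpm 1 0) <| .cons (hpm 1 1).symm <|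
    .cons (hpl 1 1) <| .cons (hpl 0 1).symm <| .cons (hpm 0 1) <| .cons (hpm 0 0).symm .nil
  refine (SimpleGraph.egirth_le_length (w := w) ?_).trans (by simp [w])
  simp [w, p, l, m, SimpleGraph.Walk.cons_isCycle_iff]

theorem egirth_le_egirth_induce {V : Type*} (G : SimpleGraph V) (s : Set V) :
    G.egirth ≤ (G.induce s).egirth :=
  SimpleGraph.IsContained.egirth_le ⟨(SimpleGraph.Embedding.induce s).toCopy⟩
end Vertices

/-- (1) If `U` is a perfect dominating set of a `(q+1)`-regular graph `G` of girth 8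
such that `G − U` is `q`-regular, then `G − U` has girth at least 8.
(2) In particular, removing the perfect dominating set `B` from `Γ_q` yields a
`q`-regular graph of girth 8 on `2q(q²−2)` vertices. -/
theorem stmt15 {F : Type*} [Field F] [Fintype F] (ξ : F) (hξ : ξ ≠ 0) :
    (∀ (V : Type) (_ : Fintype V) (G : SimpleGraph V) (q : ℕ) (U : Set V),
        (∀ x ∉ U, (G.neighborSet x ∩ U).ncard = 1) →
        G.egirth = 8 →
        (∀ v : V, (G.neighborSet v).ncard = q + 1) →
        (∀ v : ↥Uᶜ, ((G.induce Uᶜ).neighborSet v).ncard = q) →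
        8 ≤ (G.induce Uᶜ).egirth) ∧
    (∀ v : ↥(Bset F ξ)ᶜ,
        (((GammaQ F).induce (Bset F ξ)ᶜ).neighborSet v).ncard = Fintype.card F) ∧
    ((GammaQ F).induce (Bset F ξ)ᶜ).egirth = 8 ∧
    ((Bset F ξ)ᶜ : Set (SGam F ⊕ SGam F)).ncard =
      2 * Fintype.card F * (Fintype.card F ^ 2 - 2) := by
  refine ⟨fun V _ G q U _ hG _ _ => hG ▸ egirth_le_egirth_induce G Uᶜ,
    ncard_neighborSet_induce_compl_Bset,
    le_antisymm (egirth_induce_compl_Bset_le hξ) (eight_le_egirth_induce_compl_Bset ξ),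
    ncard_compl_Bset hξ⟩
end
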